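/- arXiv:2105.05422 — 2 statements merged into one kernel-verified Lean document; each statement's English description precedes it below -/
import Mathlib

section
/- A lens (f, φ) : A ⇌ B is an epimorphism in the category of small categories and lenses (right-cancellable with respect to lens composition) if and only if its underlying functor f is surjective on objects, if and only if f is surjective on morphisms. -/
open CategoryTheory

universe u

/-- A functor `F` is a discrete opfibration if for every object `a` of its domain and
every morphism `u : F.obj a ⟶ b` of its codomain, there exists a unique morphism `w`
with domain `a` such that `F.map w = u` (up to the identification of codomains). -/
def IsDiscreteOpfibration {A B : Type u} [SmallCategory A] [SmallCategory B]
    (F : A ⥤ B) : Prop :=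
  ∀ ⦃a : A⦄ ⦃b : B⦄ (u : F.obj a ⟶ b),
    ∃! w : Σ a' : A, a ⟶ a', ∃ h : F.obj w.1 = b, F.map w.2 = u ≫ eqToHom h.symm

/-- A (delta) lens between small categories: a functor together with a lifting
operation satisfying the three lens axioms. `lift u` packages the codomain
`a'` of the chosen lift together with the lift `a ⟶ a'` itself. -/
structure Lens (A B : Type u) [SmallCategory A] [SmallCategory B] where
  /-- the underlying (Get) functor -/
  func : A ⥤ B
  /-- the lifting (Put) operation -/
  lift : ∀ ⦃a : A⦄ ⦃b : B⦄, (func.obj a ⟶ b) → Σ a' : A, a ⟶ a'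
  /-- the codomain of the lift lies over the codomain of the lifted morphism -/
  lift_cod : ∀ ⦃a : A⦄ ⦃b : B⦄ (u : func.obj a ⟶ b), func.obj (lift u).1 = b
  /-- axiom (1): `f (φ (a, u)) = u` -/
  lift_map : ∀ ⦃a : A⦄ ⦃b : B⦄ (u : func.obj a ⟶ b),
      func.map (lift u).2 = u ≫ eqToHom (lift_cod u).symm
  /-- axiom (2): `φ (a, 1) = 1` -/
  lift_id : ∀ a : A, lift (𝟙 (func.obj a)) = ⟨a, 𝟙 a⟩
  /-- axiom (3): `φ (a, v ∘ u) = φ (a', v) ∘ φ (a, u)` -/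
  lift_comp : ∀ ⦃a : A⦄ ⦃b c : B⦄ (u : func.obj a ⟶ b) (v : b ⟶ c),
      lift (u ≫ v) = ⟨(lift (eqToHom (lift_cod u) ≫ v)).1,
        (lift u).2 ≫ (lift (eqToHom (lift_cod u) ≫ v)).2⟩

namespace Lens

variable {A B C : Type u} [SmallCategory A] [SmallCategory B] [SmallCategory C]

theorem lift_eqToHom (L : Lens A B) {a a' : A} (h : a' = a) {b : B}
    (u : L.func.obj a ⟶ b) (h' : L.func.obj a' = L.func.obj a) :
    L.lift (eqToHom h' ≫ u) = ⟨(L.lift u).1, eqToHom h ≫ (L.lift u).2⟩ := by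
  subst h; simp

/-- The identity lens on a small category. -/
def id (A : Type u) [SmallCategory A] : Lens A A where
  func := Functor.id A
  lift _ b u := ⟨b, u⟩
  lift_cod _ _ _ := rfl
  lift_map := by intros; simp
  lift_id := by intros; rfl
  lift_comp := by intros; simp

/-- Composition of lenses: `(L.comp M).lift u = L.lift ((M.lift u).2)`. -/
def comp (L : Lens A B) (M : Lens B C) : Lens A C where
  func := L.func ⋙ M.func
  lift _ _ u := L.lift (M.lift u).2
  lift_cod a c u := by
    show M.func.obj (L.func.obj _) = c
    rw [L.lift_cod]
    exact M.lift_cod u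
  lift_map a c u := by
    show M.func.map (L.func.map _) = _
    rw [L.lift_map, Functor.map_comp, M.lift_map, eqToHom_map]
    simp
  lift_id a := by
    show L.lift (M.lift (𝟙 (M.func.obj (L.func.obj a)))).2 = _
    rw [M.lift_id]
    exact L.lift_id a
  lift_comp a c c' u v := by
    show L.lift (M.lift (u ≫ v)).2 = _
    rw [M.lift_comp u v]
    show L.lift ((M.lift u).2 ≫ (M.lift (eqToHom (M.lift_cod u) ≫ v)).2) = _
    rw [L.lift_comp]
    have key : M.lift (eqToHom (show (L.func ⋙ M.func).obj (L.lift (M.lift u).2).1 = c by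
          show M.func.obj (L.func.obj _) = c; rw [L.lift_cod]; exact M.lift_cod u) ≫ v)
        = ⟨(M.lift (eqToHom (M.lift_cod u) ≫ v)).1,
            eqToHom (L.lift_cod (M.lift u).2) ≫ (M.lift (eqToHom (M.lift_cod u) ≫ v)).2⟩ := by
      rw [show (eqToHom (show (L.func ⋙ M.func).obj (L.lift (M.lift u).2).1 = c by
          show M.func.obj (L.func.obj _) = c; rw [L.lift_cod]; exact M.lift_cod u) ≫ v)
        = eqToHom (congrArg M.func.obj (L.lift_cod (M.lift u).2)) ≫ (eqToHom (M.lift_cod u) ≫ v) by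
          rw [← Category.assoc, eqToHom_trans]]
      exact M.lift_eqToHom (L.lift_cod (M.lift u).2) _ _
    beta_reduce
    rw [key]

/-- A lens is a monomorphism in the category of small categories and lenses if it is
left-cancellable with respect to lens composition. -/
def IsMono (f : Lens A B) : Prop :=
  ∀ ⦃D : Type u⦄ [SmallCategory D], ∀ x y : Lens D A, x.comp f = y.comp f → x = y

/-- A lens is an epimorphism in the category of small categories and lenses if it is
right-cancellable with respect to lens composition. -/
def IsEpi (f : Lens A B) : Prop :=
  ∀ ⦃C : Type u⦄ [SmallCategory C], ∀ x y : Lens B C, f.comp x = f.comp y → x = y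

end Lens

namespace Lens

variable {A B : Type u} [SmallCategory A] [SmallCategory B]

theorem ext_of_lift {L M : Lens A B} (hF : L.func = M.func)
    (hl : ∀ ⦃a : A⦄ ⦃b : B⦄ (v : L.func.obj a ⟶ b),
      L.lift v = M.lift (eqToHom (Functor.congr_obj hF a).symm ≫ v)) : L = M := by
  obtain ⟨F, l, _, _, _, _⟩ := L
  obtain ⟨G, m, _, _, _, _⟩ := M
  obtain rfl : F = G := hF
  obtain rfl : l = m := by
    funext a b v
    simpa using hl v
  rfl

theorem lift_congr {L M : Lens A B} (h : L = M) ⦃a : A⦄ ⦃b : B⦄ (v : L.func.obj a ⟶ b) :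
    L.lift v =
      M.lift (eqToHom (Functor.congr_obj (congrArg Lens.func h) a).symm ≫ v) := by
  subst h
  simp

theorem map_lift_sigma (L : Lens A B) {a : A} (w : Σ b : B, L.func.obj a ⟶ b) :
    (⟨L.func.obj (L.lift w.2).1, L.func.map (L.lift w.2).2⟩ : Σ b : B, L.func.obj a ⟶ b) = w := by
  rw [L.lift_map]
  obtain ⟨b, v⟩ := w
  have key : ∀ (c : B) (h : b = c), (⟨c, v ≫ eqToHom h⟩ : Σ b : B, L.func.obj a ⟶ b) = ⟨b, v⟩ := by
    rintro _ rfl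
    simp
  exact key _ _

theorem lift_sigma_injective (L : Lens A B) {a : A} {w w' : Σ b : B, L.func.obj a ⟶ b}
    (h : L.lift w.2 = L.lift w'.2) : w = w' := by
  rw [← L.map_lift_sigma w, ← L.map_lift_sigma w', h]

theorem isEpi_of_surjective (f : Lens A B) (hf : Function.Surjective f.func.obj) : f.IsEpi := by
  intro C _ x y hxy
  have hfun : f.func ⋙ x.func = f.func ⋙ y.func := congrArg Lens.func hxy
  have hobj : ∀ b, x.func.obj b = y.func.obj b := fun b => by
    obtain ⟨a, rfl⟩ := hf b
    exact Functor.congr_obj hfun a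
  have hF : x.func = y.func := by
    refine CategoryTheory.Functor.ext hobj fun b b' v => ?_
    obtain ⟨a, rfl⟩ := hf b
    have hv : v = f.func.map (f.lift v).2 ≫ eqToHom (f.lift_cod v) := by
      simp [f.lift_map]
    have hm := Functor.congr_hom hfun (f.lift v).2
    simp only [Functor.comp_map] at hm
    rw [hv, Functor.map_comp, Functor.map_comp, hm]
    simp [eqToHom_map]
  refine ext_of_lift hF fun b c v => ?_
  obtain ⟨a, rfl⟩ := hf b
  exact f.lift_sigma_injective (lift_congr hxy v)

end Lens

/-- Two copies of `B` glued along the objects satisfying `P`: an object outside `P` carries a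
label, and an object of `P` has the label `True`. -/
structure GluedCopies {B : Type u} (P : B → Prop) : Type u where
  /-- the underlying object of `B` -/
  base : B
  /-- the copy in which the object lies -/
  label : Prop
  /-- the two copies of an object of `P` are identified -/
  label_of_mem : P base → label

namespace GluedCopies

theorem ext_base {B : Type u} {P : B → Prop} {p q : GluedCopies P} (hb : p.base = q.base)
    (hl : p.label ↔ q.label) : p = q := by
  obtain ⟨b, s, _⟩ := p
  obtain ⟨b', s', _⟩ := q
  obtain rfl : b = b' := hb
  obtain rfl : s = s' := propext hl
  rfl

variable {B : Type u} [SmallCategory B]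

/-- `P` is a cosieve: it is closed under the codomains of outgoing morphisms. -/
def IsCosieve (P : B → Prop) : Prop :=
  ∀ ⦃b b' : B⦄, (b ⟶ b') → P b → P b'

/-- Morphisms of glued copies preserve the label unless they end in `P`. -/
@[ext]
structure Hom {P : B → Prop} (p q : GluedCopies P) : Type u where
  /-- the underlying morphism of `B` -/
  base : p.base ⟶ q.base
  /-- the label is preserved outside `P` -/
  label_eq : ¬ P q.base → q.label = p.label

/-- The category of two copies of `B` glued along a cosieve. -/
@[reducible]
def category {P : B → Prop} (hP : IsCosieve P) : SmallCategory (GluedCopies P) where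
  Hom := Hom
  id p := ⟨𝟙 p.base, fun _ => rfl⟩
  comp v w := ⟨v.base ≫ w.base, fun h =>
    (w.label_eq h).trans (v.label_eq fun h' => h (hP w.base h'))⟩
  id_comp v := Hom.ext (Category.id_comp v.base)
  comp_id v := Hom.ext (Category.comp_id v.base)
  assoc v w z := Hom.ext (Category.assoc v.base w.base z.base)

/-- The object over `b` in the copy labelled `s`. -/
def inclusionObj (P : B → Prop) (s : Prop) (b : B) : GluedCopies P :=
  ⟨b, P b ∨ s, Or.inl⟩

theorem inclusionObj_eq {P : B → Prop} (hP : IsCosieve P) {s : Prop} {b : B} {q : GluedCopies P}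
    (v : Hom (inclusionObj P s b) q) : inclusionObj P s q.base = q := by
  refine ext_base rfl ?_
  by_cases hq : P q.base
  · simp [inclusionObj, hq, q.label_of_mem hq]
  · have hb : ¬ P b := fun h => hq (hP v.base h)
    have := v.label_eq hq
    simp_all [inclusionObj]

theorem base_comp {P : B → Prop} (hP : IsCosieve P) {p q r : GluedCopies P} :
    letI := category hP
    ∀ (v : p ⟶ q) (w : q ⟶ r), Hom.base (v ≫ w) = Hom.base v ≫ Hom.base w :=
  fun _ _ => rfl

theorem base_eqToHom {P : B → Prop} (hP : IsCosieve P) {p q : GluedCopies P} (h : p = q) :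
    letI := category hP
    Hom.base (eqToHom h) = eqToHom (congrArg GluedCopies.base h) := by
  subst h
  rfl

/-- The inclusion of the copy labelled `s`, as a lens. -/
def inclusion {P : B → Prop} (hP : IsCosieve P) (s : Prop) :
    letI := category hP
    Lens B (GluedCopies P) :=
  letI := category hP
  { func :=
      { obj := inclusionObj P s
        map := fun {b b'} v => ⟨v, fun h => by
          have h' : ¬ P b := fun hb => h (hP v hb)
          have h'' : ¬ P b' := h
          simp [inclusionObj, h', h'']⟩
        map_id := fun _ => rfl
        map_comp := fun _ _ => rfl }
    lift := fun _ q v => ⟨q.base, Hom.base v⟩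
    lift_cod := fun _ _ v => inclusionObj_eq hP v
    lift_map := fun _ q v => Hom.ext (by
      rw [base_comp, base_eqToHom]
      exact (Category.comp_id _).symm)
    lift_id := fun _ => rfl
    lift_comp := fun b q r v w => by
      simp only [base_comp, base_eqToHom]
      congr 2
      exact (Category.id_comp _).symm }

theorem comp_inclusion_eq {A : Type u} [SmallCategory A] {P : B → Prop} (hP : IsCosieve P)
    (f : Lens A B) (hf : ∀ a, P (f.func.obj a)) (s t : Prop) :
    letI := category hP
    f.comp (inclusion hP s) = f.comp (inclusion hP t) := by
  let := category hP
  have hobj : ∀ a, (f.comp (inclusion hP s)).func.obj a = (f.comp (inclusion hP t)).func.obj a :=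
    fun a => ext_base rfl (iff_of_true (Or.inl (hf a)) (Or.inl (hf a)))
  refine Lens.ext_of_lift (CategoryTheory.Functor.ext hobj fun a a' v => Hom.ext ?_) fun a q v => ?_
  · simp only [base_comp, base_eqToHom]
    exact ((Category.id_comp _).trans (Category.comp_id _)).symm
  · have hv : Hom.base (eqToHom (hobj a).symm ≫ v) = Hom.base v := by
      rw [base_comp, base_eqToHom]
      exact Category.id_comp _
    exact congrArg (fun w : f.func.obj a ⟶ q.base => f.lift w) hv.symm

end GluedCopies

theorem Lens.surjective_of_isEpi {A B : Type u} [SmallCategory A] [SmallCategory B]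
    (f : Lens A B) (hf : f.IsEpi) : Function.Surjective f.func.obj := by
  have hP : GluedCopies.IsCosieve fun b => ∃ a, f.func.obj a = b := by
    rintro _ b' v ⟨a, rfl⟩
    exact ⟨(f.lift v).1, f.lift_cod v⟩
  let := GluedCopies.category hP
  have h := hf _ _ (GluedCopies.comp_inclusion_eq hP f (fun a => ⟨a, rfl⟩) True False)
  intro b
  have hb : GluedCopies.inclusionObj _ True b = GluedCopies.inclusionObj _ False b :=
    Functor.congr_obj (congrArg Lens.func h) b
  simpa [GluedCopies.inclusionObj] using hb

theorem Lens.surjective_obj_iff_surjective_map {A B : Type u} [SmallCategory A] [SmallCategory B]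
    (f : Lens A B) : Function.Surjective f.func.obj ↔
      ∀ ⦃b b' : B⦄ (v : b ⟶ b'), ∃ (a a' : A) (u : a ⟶ a')
        (h : f.func.obj a = b) (h' : f.func.obj a' = b'),
        f.func.map u = eqToHom h ≫ v ≫ eqToHom h'.symm := by
  refine ⟨fun hf b b' v => ?_, fun hf b => ?_⟩
  · obtain ⟨a, rfl⟩ := hf b
    exact ⟨a, (f.lift v).1, (f.lift v).2, rfl, f.lift_cod v, by simp [f.lift_map]⟩
  · obtain ⟨a, _, _, h, _⟩ := hf (𝟙 b)
    exact ⟨a, h⟩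

/-- A lens is an epimorphism in the category of small categories and lenses iff its
underlying functor is surjective on objects, iff its underlying functor is surjective
on morphisms. -/
theorem lens_epi_characterisation {A B : Type u} [SmallCategory A] [SmallCategory B]
    (f : Lens A B) :
    (f.IsEpi ↔ Function.Surjective f.func.obj) ∧
    (f.IsEpi ↔ ∀ ⦃b b' : B⦄ (v : b ⟶ b'), ∃ (a a' : A) (u : a ⟶ a')
        (h : f.func.obj a = b) (h' : f.func.obj a' = b'),
        f.func.map u = eqToHom h ≫ v ≫ eqToHom h'.symm) := by
  have h : f.IsEpi ↔ Function.Surjective f.func.obj :=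
    ⟨f.surjective_of_isEpi, f.isEpi_of_surjective⟩
  exact ⟨h, h.trans f.surjective_obj_iff_surjective_map⟩
end

section
/- Given lenses (f, φ) : A ⇌ B and (g, γ) : C ⇌ B with the underlying functor g a discrete opfibration, the strict pullback category A ×_B C (objects: pairs (a, c) with f(a) = g(c); morphisms: pairs (u, v) with f(u) = g(v)), equipped with the projection lens to A (lifting ((a, c), u) ↦ (u, γ(c, f(u)))) and the projection lens to C, is a pullback in the category of small categories and lenses: for any lenses (p, ρ) : D ⇌ A and (q, κ) : D ⇌ C such that the composite of (p, ρ) with (f, φ) equals the composite of (q, κ) with (g, γ) as lenses, there exists a unique lens (h, θ) : D ⇌ A ×_B C whose composites with the two projection lenses equal (p, ρ) and (q, κ) respectively. -/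
open CategoryTheory

universe u

/-- The strict pullback category of two functors: objects are pairs `(a, c)` with
`f.obj a = g.obj c`, morphisms are pairs `(u, v)` with `f.map u = g.map v`
(modulo the identification of endpoints). -/
def CatPullback {A B C : Type u} [SmallCategory A] [SmallCategory B] [SmallCategory C]
    (f : A ⥤ B) (g : C ⥤ B) : Type u :=
  { p : A × C // f.obj p.1 = g.obj p.2 }

namespace CatPullback

variable {A B C : Type u} [SmallCategory A] [SmallCategory B] [SmallCategory C]
  {f : A ⥤ B} {g : C ⥤ B}

instance : SmallCategory (CatPullback f g) where
  Hom x y := { m : (x.1.1 ⟶ y.1.1) × (x.1.2 ⟶ y.1.2) //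
      f.map m.1 ≫ eqToHom y.2 = eqToHom x.2 ≫ g.map m.2 }
  id x := ⟨(𝟙 _, 𝟙 _), by simp⟩
  comp m n := ⟨(m.1.1 ≫ n.1.1, m.1.2 ≫ n.1.2), by
    rw [Functor.map_comp, Functor.map_comp, Category.assoc, n.2, ← Category.assoc, m.2,
      Category.assoc]⟩
  id_comp m := by apply Subtype.ext; simp
  comp_id m := by apply Subtype.ext; simp
  assoc m n k := by apply Subtype.ext; simp

/-- The first projection functor of the strict pullback. -/
def proj₁ : CatPullback f g ⥤ A where
  obj x := x.1.1
  map m := m.1.1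

/-- The second projection functor of the strict pullback. -/
def proj₂ : CatPullback f g ⥤ C where
  obj x := x.1.2
  map m := m.1.2

end CatPullback

namespace IsDiscreteOpfibration

variable {A B : Type u} [SmallCategory A] [SmallCategory B] {F : A ⥤ B}

theorem sigma_ext (hF : IsDiscreteOpfibration F) {a : A} {w w' : Σ a' : A, a ⟶ a'}
    (h : F.obj w.1 = F.obj w'.1) (hw : F.map w.2 = F.map w'.2 ≫ eqToHom h.symm) : w = w' :=
  (hF (F.map w'.2)).unique ⟨h, hw⟩ ⟨rfl, by simp⟩

end IsDiscreteOpfibration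

namespace Lens

variable {A B C D : Type u} [SmallCategory A] [SmallCategory B] [SmallCategory C]
  [SmallCategory D]

theorem ext_of_lift_eq {L M : Lens A B} (hf : L.func = M.func)
    (hl : ∀ ⦃a : A⦄ ⦃b : B⦄ (u : L.func.obj a ⟶ b),
      L.lift u = M.lift (eqToHom (Functor.congr_obj hf a).symm ≫ u)) : L = M := by
  obtain ⟨f, l, _, _, _, _⟩ := L
  obtain ⟨g, m, _, _, _, _⟩ := M
  dsimp only at hf
  subst hf
  have hlm : l = m := by
    funext a b u
    simpa using hl u
  subst hlm
  rfl

theorem lift_eq_of_eq {L M : Lens A B} (h : L = M) {a : A} {b : B} (u : L.func.obj a ⟶ b)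
    (e : M.func.obj a = L.func.obj a) : L.lift u = M.lift (eqToHom e ≫ u) := by
  subst h
  simp

theorem lift_comp_eqToHom (L : Lens A B) {a : A} {b b' : B} (u : L.func.obj a ⟶ b)
    (e : b = b') : L.lift (u ≫ eqToHom e) = L.lift u := by
  subst e
  simp

/-- The lifts of a lens over a discrete opfibration are forced. -/
theorem lift_func_map (L : Lens A B) (hL : IsDiscreteOpfibration L.func) {a a' : A}
    (w : a ⟶ a') : L.lift (L.func.map w) = ⟨a', w⟩ :=
  hL.sigma_ext (L.lift_cod _) (L.lift_map _)

theorem lift_eq_comp_lift (L : Lens D A) (P : Lens A B) (hP : IsDiscreteOpfibration P.func)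
    {d : D} {a : A} (u : L.func.obj d ⟶ a) :
    L.lift u = (L.comp P).lift (a := d) (P.func.map u) := by
  change _ = L.lift (P.lift (P.func.map u)).2
  rw [P.lift_func_map hP]

theorem eq_of_comp_eq {L M : Lens D A} (P : Lens A B) (hP : IsDiscreteOpfibration P.func)
    (hf : L.func = M.func) (h : L.comp P = M.comp P) : L = M := by
  refine ext_of_lift_eq hf fun d a u => ?_
  rw [lift_eq_comp_lift L P hP, lift_eq_comp_lift M P hP, Functor.map_comp, eqToHom_map]
  exact lift_eq_of_eq h (a := d) (P.func.map u) _

/-- A factorization of the underlying functor of a lens through a discrete opfibration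
underlies a factorization of lenses. -/
theorem exists_comp_eq (P : Lens A B) (hP : IsDiscreteOpfibration P.func) (p : Lens D B)
    (H : D ⥤ A) (hH : p.func = H ⋙ P.func) :
    ∃ L : Lens D A, L.func = H ∧ L.comp P = p := by
  obtain ⟨f, l, lcod, lmap, lid, lcomp⟩ := p
  dsimp only at hH
  subst hH
  have key : ∀ ⦃d : D⦄ ⦃a : A⦄ (u : H.obj d ⟶ a),
      (⟨H.obj (l (P.func.map u)).1, H.map (l (P.func.map u)).2⟩ : Σ a' : A, H.obj d ⟶ a') =
        ⟨a, u⟩ := fun d a u => hP.sigma_ext (lcod (P.func.map u)) (lmap (P.func.map u))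
  have kcod : ∀ ⦃d : D⦄ ⦃a : A⦄ (u : H.obj d ⟶ a), H.obj (l (P.func.map u)).1 = a :=
    fun d a u => congrArg Sigma.fst (key u)
  refine ⟨⟨H, fun d a u => l (a := d) (P.func.map u), kcod, fun d a u => ?_, fun d => ?_,
    fun d a b u v => ?_⟩, rfl, ?_⟩
  · have := (Sigma.mk.inj_iff.mp (key u)).2
    rw [← heq_iff_eq]
    exact this.trans (by simp)
  · simpa using lid d
  · rw [Functor.map_comp]
    refine (lcomp (P.func.map u) (P.func.map v)).trans ?_
    rw [Functor.map_comp, eqToHom_map]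
  · refine ext_of_lift_eq rfl fun d b (u : P.func.obj (H.obj d) ⟶ b) => ?_
    change l (a := d) (P.func.map (P.lift u).2) = l (a := d) (𝟙 (P.func.obj (H.obj d)) ≫ u)
    rw [P.lift_map, Category.id_comp u]
    exact lift_comp_eqToHom ⟨H ⋙ P.func, l, lcod, lmap, lid, lcomp⟩ (a := d) u _

end Lens

namespace CatPullback

variable {A B C D : Type u} [SmallCategory A] [SmallCategory B] [SmallCategory C]
  [SmallCategory D] {f : A ⥤ B} {g : C ⥤ B}

theorem hom_ext {x y : CatPullback f g} {m n : x ⟶ y} (h₁ : proj₁.map m = proj₁.map n)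
    (h₂ : proj₂.map m = proj₂.map n) : m = n :=
  Subtype.ext (Prod.ext h₁ h₂)

theorem functor_ext {H K : D ⥤ CatPullback f g} (h₁ : H ⋙ proj₁ = K ⋙ proj₁)
    (h₂ : H ⋙ proj₂ = K ⋙ proj₂) : H = K := by
  have hobj : ∀ d : D, H.obj d = K.obj d := fun d =>
    Subtype.ext (Prod.ext (Functor.congr_obj h₁ d) (Functor.congr_obj h₂ d))
  refine CategoryTheory.Functor.ext hobj fun d d' w => hom_ext ?_ ?_
  · simpa [eqToHom_map] using Functor.congr_hom h₁ w
  · simpa [eqToHom_map] using Functor.congr_hom h₂ w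

/-- The functor into the strict pullback induced by a commutative square. -/
def pair (p : D ⥤ A) (q : D ⥤ C) (h : p ⋙ f = q ⋙ g) : D ⥤ CatPullback f g where
  obj d := ⟨(p.obj d, q.obj d), Functor.congr_obj h d⟩
  map w := ⟨(p.map w, q.map w), by
    have hw := Functor.congr_hom h w
    dsimp only [Functor.comp_map] at hw
    rw [hw]
    simp⟩
  map_id d := hom_ext (p.map_id d) (q.map_id d)
  map_comp v w := hom_ext (p.map_comp v w) (q.map_comp v w)

theorem isDiscreteOpfibration_proj₁ (hg : IsDiscreteOpfibration g) :
    IsDiscreteOpfibration (proj₁ : CatPullback f g ⥤ A) := by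
  rintro ⟨⟨a, c⟩, e : f.obj a = g.obj c⟩ a' (u : a ⟶ a')
  obtain ⟨⟨c', v⟩, ⟨h, hv⟩, -⟩ := hg (eqToHom e.symm ≫ f.map u)
  refine ⟨⟨⟨(a', c'), h.symm⟩, ⟨(u, v), by simp [hv]⟩⟩, ⟨rfl, ?_⟩, ?_⟩
  · exact (Category.comp_id u).symm
  rintro ⟨⟨⟨a₂, c₂⟩, e₂⟩, ⟨⟨u₂, v₂⟩, huv⟩⟩ ⟨h', hu⟩
  dsimp [proj₁] at h' hu e₂ huv
  subst h'
  obtain rfl : u₂ = u := hu.trans (Category.comp_id u)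
  have hw : (⟨c₂, v₂⟩ : Σ c' : C, c ⟶ c') = ⟨c', v⟩ := by
    refine hg.sigma_ext (e₂.symm.trans h.symm) ?_
    dsimp only at hv ⊢
    have hgv : g.map v₂ = eqToHom e.symm ≫ f.map u₂ ≫ eqToHom e₂ := by
      rw [huv, eqToHom_trans_assoc, eqToHom_refl]
      exact (Category.id_comp _).symm
    simp [hv, hgv]
  cases hw
  rfl

end CatPullback

/-- If `G : C ⇌ B` has underlying functor a discrete opfibration, then the strict
pullback of the underlying functors of `F : A ⇌ B` and `G`, equipped with the canonical
projection lenses, is a pullback in the category of small categories and lenses. -/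
theorem lens_pullback_along_dopf {A B C : Type u}
    [SmallCategory A] [SmallCategory B] [SmallCategory C]
    (F : Lens A B) (G : Lens C B) (hG : IsDiscreteOpfibration G.func)
    (P₀ : Lens (CatPullback F.func G.func) A)
    (h₀ : P₀.func = CatPullback.proj₁)
    (P₁ : Lens (CatPullback F.func G.func) C)
    (h₁ : P₁.func = CatPullback.proj₂)
    (hlift₀ : ∀ (x : CatPullback F.func G.func) (a' : A) (u : x.1.1 ⟶ a'),
      P₀.lift (eqToHom (Functor.congr_obj h₀ x) ≫ u) =
        ⟨⟨(a', (G.lift (eqToHom x.2.symm ≫ F.func.map u)).1),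
            (G.lift_cod (eqToHom x.2.symm ≫ F.func.map u)).symm⟩,
          ⟨(u, (G.lift (eqToHom x.2.symm ≫ F.func.map u)).2),
            by rw [G.lift_map]; simp⟩⟩)
    (hlift₁ : ∀ (x : CatPullback F.func G.func) (c' : C) (v : x.1.2 ⟶ c'),
      P₁.lift (eqToHom (Functor.congr_obj h₁ x) ≫ v) =
        ⟨⟨((F.lift (eqToHom x.2 ≫ G.func.map v)).1, c'),
            F.lift_cod (eqToHom x.2 ≫ G.func.map v)⟩,
          ⟨((F.lift (eqToHom x.2 ≫ G.func.map v)).2, v),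
            by rw [F.lift_map]; simp⟩⟩) :
    ∀ (D : Type u) [SmallCategory D] (p : Lens D A) (q : Lens D C),
      p.comp F = q.comp G →
      ∃! h : Lens D (CatPullback F.func G.func), h.comp P₀ = p ∧ h.comp P₁ = q := by
  obtain ⟨f₀, l₀, cod₀, map₀, id₀, comp₀⟩ := P₀
  obtain ⟨f₁, l₁, cod₁, map₁, id₁, comp₁⟩ := P₁
  dsimp only at h₀ h₁
  subst h₀ h₁
  intro D _ p q hpq
  set P₀ : Lens (CatPullback F.func G.func) A :=
    ⟨CatPullback.proj₁, l₀, cod₀, map₀, id₀, comp₀⟩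
  set P₁ : Lens (CatPullback F.func G.func) C :=
    ⟨CatPullback.proj₂, l₁, cod₁, map₁, id₁, comp₁⟩
  have hP₀ : IsDiscreteOpfibration P₀.func := CatPullback.isDiscreteOpfibration_proj₁ hG
  have hfunc : p.func ⋙ F.func = q.func ⋙ G.func := congrArg Lens.func hpq
  obtain ⟨L, hL, hLp⟩ := Lens.exists_comp_eq P₀ hP₀ p (CatPullback.pair _ _ hfunc) rfl
  refine ⟨L, ⟨hLp, ?_⟩, ?_⟩
  · obtain ⟨_, l, lcod, lmap, lid, lcomp⟩ := L
    dsimp only at hL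
    subst hL
    set L : Lens D (CatPullback F.func G.func) :=
      ⟨CatPullback.pair p.func q.func hfunc, l, lcod, lmap, lid, lcomp⟩
    refine Lens.ext_of_lift_eq rfl fun d c (v : q.func.obj d ⟶ c) => ?_
    have hv := (congrArg (P₁.lift (a := L.func.obj d) (b := c)) (Category.id_comp v).symm).trans
      (hlift₁ (L.func.obj d) c v)
    have e : F.func.obj (p.func.obj d) = G.func.obj (q.func.obj d) := Functor.congr_obj hfunc d
    calc L.lift (P₁.lift (a := L.func.obj d) v).2
        = p.lift (F.lift (eqToHom e ≫ G.func.map v)).2 := by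
          rw [hv, Lens.lift_eq_comp_lift L P₀ hP₀]
          let w := (F.lift (eqToHom e ≫ G.func.map v)).2
          exact (Lens.lift_eq_of_eq hLp (a := d) w rfl).trans
            (congrArg (p.lift (a := d) (b := _)) (Category.id_comp w))
      _ = q.lift (G.lift (eqToHom e.symm ≫ eqToHom e ≫ G.func.map v)).2 :=
          Lens.lift_eq_of_eq hpq (a := d) (eqToHom e ≫ G.func.map v) e.symm
      _ = q.lift (G.lift (G.func.map v)).2 := by
          rw [eqToHom_trans_assoc, eqToHom_refl, Category.id_comp]
      _ = q.lift v := by rw [G.lift_func_map hG]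
      _ = q.lift (𝟙 _ ≫ v) := by rw [Category.id_comp]
  · rintro M ⟨hM₀, hM₁⟩
    refine Lens.eq_of_comp_eq P₀ hP₀ ?_ (hM₀.trans hLp.symm)
    rw [hL]
    exact CatPullback.functor_ext (congrArg Lens.func hM₀) (congrArg Lens.func hM₁)
end
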